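/- Let A be a skew left brace and suppose A = B + C is a factorization through strong left ideals B and C that are trivial as skew left braces. Then A is right nilpotent of class at most three, i.e., A^(3) = 0 (equivalently, (x*y)*z = 0 for all x,y,z ∈ A). -/

import Mathlib

/-- A skew left brace: `(A,+)` and `(A,∘)` are groups (sharing the same identity `0`)
such that `a ∘ (b + c) = a ∘ b - a + a ∘ c`.  Here `circ` is the operation `∘` and
`cinv a` is the inverse of `a` in `(A,∘)`. -/
class SkewBrace (A : Type*) extends AddGroup A where
  circ : A → A → A
  cinv : A → A
  circ_assoc : ∀ a b c : A, circ (circ a b) c = circ a (circ b c)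
  zero_circ : ∀ a : A, circ 0 a = a
  circ_zero : ∀ a : A, circ a 0 = a
  cinv_circ : ∀ a : A, circ (cinv a) a = 0
  circ_cinv : ∀ a : A, circ a (cinv a) = 0
  compat : ∀ a b c : A, circ a (b + c) = circ a b + -a + circ a c

open SkewBrace

/-- `lam a b = -a + a ∘ b`. -/
def lam {A : Type*} [SkewBrace A] (a b : A) : A := -a + circ a b

/-- The star operation `a * b = lam a b - b = -a + a ∘ b - b`. -/
def bstar {A : Type*} [SkewBrace A] (a b : A) : A := lam a b - b

/-- `X * Y`: the subgroup of `(A,+)` generated by `{x * y : x ∈ X, y ∈ Y}`. -/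
def starSpan {A : Type*} [SkewBrace A] (X Y : Set A) : AddSubgroup A :=
  AddSubgroup.closure {z | ∃ x ∈ X, ∃ y ∈ Y, z = bstar x y}

/-- The right series of `st`: `rseriesOf st 0 = A = A^(1)` and
`rseriesOf st n = A^(n+1)`, so that `A^(n+1) = A^(n) * A`. -/
def rseriesOf {G : Type*} [AddGroup G] (st : G → G → G) : ℕ → AddSubgroup G
  | 0 => ⊤
  | n + 1 => AddSubgroup.closure {z | ∃ u ∈ rseriesOf st n, ∃ a : G, z = st u a}

/-!
Let `I` be a strong left ideal that is trivial as a skew brace. On `I` the map `λ_x` only depends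
on the additive coset `x + I`. If moreover `A = I + J` with `J` a trivial left ideal, then
`λ_{λ_x(y)} = λ_y` on `I` for all `x, y`: modulo `I` one may take `y ∈ J`, and writing `x = i ∘ j`
with `i ∈ I` and `j ∈ J`, the factor `j` fixes `y`, so one may take `x ∈ I`; then
`λ_{λ_x(y)} = λ_{x + λ_x(y)} = λ_{x ∘ y} = λ_x λ_y = λ_y` on `I`.
Since `x + y = x ∘ λ_x⁻¹(y)`, this says that `λ`, acting on `I`, is a homomorphism on `(A, +)`, so
that `λ_{x * y} = λ_{λ_x(y)} λ_{-y}` is the identity on `I`. Applying this with `I = B` and with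
`I = C` shows that `λ_{x * y}` is the identity of `A = B + C`.
-/

namespace SkewBrace

variable {A : Type*} [SkewBrace A]

section Lambda

lemma circ_eq_add_lam (a b : A) : circ a b = a + lam a b := by
  rw [lam, add_neg_cancel_left]

lemma lam_add (a x y : A) : lam a (x + y) = lam a x + lam a y := by
  simp only [lam, compat, add_assoc]

lemma zero_lam (x : A) : lam 0 x = x := by
  rw [lam, zero_circ, neg_zero, zero_add]

lemma circ_add (a b x : A) : circ a (b + x) = circ a b + lam a x := by
  rw [compat, lam, add_assoc]

lemma circ_lam (a b x : A) : lam (circ a b) x = lam a (lam b x) := by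
  rw [lam, circ_assoc, circ_eq_add_lam b x, circ_add, neg_add_cancel_left]

lemma lam_lam_cinv (a x : A) : lam a (lam (cinv a) x) = x := by
  rw [← circ_lam, circ_cinv, zero_lam]

lemma circ_lam_cinv (a x : A) : circ a (lam (cinv a) x) = a + x := by
  rw [circ_eq_add_lam, lam_lam_cinv]

lemma add_lam (x y z : A) : lam (x + y) z = lam x (lam (lam (cinv x) y) z) := by
  rw [← circ_lam, circ_lam_cinv]

end Lambda

section Kernel

variable (A) in
/-- The kernel of `λ : (A, ∘) → Aut (A, +)`. It is also a subgroup of `(A, +)`, and it is this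
additive structure that is recorded, since the right series consists of additive subgroups. -/
def lamKer : AddSubgroup A where
  carrier := {k | ∀ z, lam k z = z}
  zero_mem' := zero_lam
  add_mem' {k l} hk hl z := by
    have hkl : circ k l = k + l := by rw [circ_eq_add_lam, hk]
    rw [← hkl, circ_lam, hl, hk]
  neg_mem' {k} hk z := by
    have hinv : circ k (-k) = 0 := by rw [circ_eq_add_lam, hk, add_neg_cancel]
    rw [← hk (lam (-k) z), ← circ_lam, hinv, zero_lam]

lemma mem_lamKer_iff {k : A} : k ∈ lamKer A ↔ ∀ z, lam k z = z := Iff.rfl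

lemma mem_lamKer_iff_bstar_eq_zero {k : A} : k ∈ lamKer A ↔ ∀ z, bstar k z = 0 := by
  simp only [mem_lamKer_iff, bstar, sub_eq_zero]

lemma rseriesOf_bstar_succ_eq_bot_iff (n : ℕ) :
    rseriesOf (bstar (A := A)) (n + 1) = ⊥ ↔ rseriesOf (bstar (A := A)) n ≤ lamKer A := by
  rw [rseriesOf, AddSubgroup.closure_eq_bot_iff]
  constructor
  · intro h u hu
    exact mem_lamKer_iff_bstar_eq_zero.mpr fun z => h ⟨u, hu, z, rfl⟩
  · rintro h _ ⟨u, hu, z, rfl⟩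
    exact mem_lamKer_iff_bstar_eq_zero.mp (h hu) z

lemma rseriesOf_bstar_two_eq_bot_iff :
    rseriesOf (bstar (A := A)) 2 = ⊥ ↔ ∀ x y : A, bstar x y ∈ lamKer A := by
  rw [rseriesOf_bstar_succ_eq_bot_iff, rseriesOf, AddSubgroup.closure_le]
  constructor
  · intro h x y
    exact h ⟨x, AddSubgroup.mem_top x, y, rfl⟩
  · rintro h _ ⟨x, -, y, rfl⟩
    exact h x y

end Kernel

section LeftIdeal

/-- `I` is a left ideal: a subgroup of `(A, +)` stable under every `λ_a`. A strong left ideal is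
expressed by the additional instance `[I.Normal]`. -/
def IsLeftIdeal (I : AddSubgroup A) : Prop := ∀ a : A, ∀ x ∈ I, lam a x ∈ I

/-- The operations `+` and `∘` agree on `I`; for a left ideal `I`, this says that `I` is trivial
as a skew brace. -/
def IsTrivialOn (I : AddSubgroup A) : Prop := ∀ x ∈ I, ∀ y ∈ I, x + y = circ x y

variable {I J : AddSubgroup A} {x y z : A}

lemma IsTrivialOn.lam_eq_self (hI : IsTrivialOn I) (hx : x ∈ I) (hy : y ∈ I) : lam x y = y := by
  rw [lam, ← hI x hx y hy, neg_add_cancel_left]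

lemma IsLeftIdeal.add_lam_of_mem_right (hI : IsLeftIdeal I) (hIt : IsTrivialOn I)
    (hy : y ∈ I) (hz : z ∈ I) : lam (x + y) z = lam x z := by
  rw [add_lam, hIt.lam_eq_self (hI _ y hy) hz]

lemma IsLeftIdeal.add_lam_of_mem_left [I.Normal] (hI : IsLeftIdeal I) (hIt : IsTrivialOn I)
    (hy : y ∈ I) (hz : z ∈ I) : lam (y + x) z = lam x z := by
  have hconj : -x + y + x ∈ I := by
    simpa only [neg_neg] using ‹I.Normal›.conj_mem y hy (-x)
  calc lam (y + x) z = lam (x + (-x + y + x)) z := by rw [add_assoc, add_neg_cancel_left]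
    _ = lam x z := hI.add_lam_of_mem_right hIt hconj hz

lemma IsLeftIdeal.lam_lam_of_mem [I.Normal] (hI : IsLeftIdeal I) (hIt : IsTrivialOn I)
    (hx : x ∈ I) (hz : z ∈ I) : lam (lam x y) z = lam y z :=
  calc lam (lam x y) z = lam (x + lam x y) z := (hI.add_lam_of_mem_left hIt hx hz).symm
    _ = lam x (lam y z) := by rw [← circ_eq_add_lam, circ_lam]
    _ = lam y z := hIt.lam_eq_self hx (hI y z hz)

lemma IsLeftIdeal.exists_circ_eq [I.Normal] (hJ : IsLeftIdeal J) (hIJ : Codisjoint I J) (a : A) :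
    ∃ i ∈ I, ∃ j ∈ J, circ i j = a := by
  obtain ⟨i, hi, j, hj, rfl⟩ :=
    AddSubgroup.mem_sup_of_normal_left.mp (hIJ.eq_top ▸ AddSubgroup.mem_top a)
  exact ⟨i, hi, lam (cinv i) j, hJ _ j hj, circ_lam_cinv i j⟩

lemma IsLeftIdeal.lam_lam [I.Normal] (hI : IsLeftIdeal I) (hIt : IsTrivialOn I)
    (hJ : IsLeftIdeal J) (hJt : IsTrivialOn J) (hIJ : Codisjoint I J) (x y : A) (hz : z ∈ I) :
    lam (lam x y) z = lam y z := by
  obtain ⟨i, hi, j, hj, rfl⟩ := hJ.exists_circ_eq hIJ x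
  obtain ⟨i', hi', j', hj', rfl⟩ :=
    AddSubgroup.mem_sup_of_normal_left.mp (hIJ.eq_top ▸ AddSubgroup.mem_top y)
  calc lam (lam (circ i j) (i' + j')) z
      = lam (lam (circ i j) j') z := by rw [lam_add, hI.add_lam_of_mem_left hIt (hI _ i' hi') hz]
    _ = lam (lam i j') z := by rw [circ_lam, hJt.lam_eq_self hj hj']
    _ = lam j' z := hI.lam_lam_of_mem hIt hi hz
    _ = lam (i' + j') z := (hI.add_lam_of_mem_left hIt hi' hz).symm

lemma IsLeftIdeal.lam_bstar_eq_self [I.Normal] (hI : IsLeftIdeal I) (hIt : IsTrivialOn I)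
    (hJ : IsLeftIdeal J) (hJt : IsTrivialOn J) (hIJ : Codisjoint I J) (x y : A) (hz : z ∈ I) :
    lam (bstar x y) z = z := by
  have hinv (u v : A) {w : A} (hw : w ∈ I) : lam (lam u v) w = lam v w :=
    hI.lam_lam hIt hJ hJt hIJ u v hw
  have hadd (u v : A) : lam (u + v) z = lam u (lam v z) := by
    rw [add_lam, hinv _ v hz]
  calc lam (bstar x y) z = lam (lam x y) (lam (-y) z) := by rw [bstar, sub_eq_add_neg, hadd]
    _ = lam y (lam (-y) z) := hinv x y (hI _ z hz)
    _ = z := by rw [← hadd, add_neg_cancel, zero_lam]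

end LeftIdeal

end SkewBrace

/-- if `A = B + C` is a factorization through strong left ideals which are
trivial as skew braces, then `A` is right nilpotent of class at most three:
`A^(3) = 0` (here `rseriesOf bstar 2 = A^(3)`), equivalently `(x*y)*z = 0` for all `x,y,z`. -/
theorem stmt9 {A : Type*} [SkewBrace A] (B C : AddSubgroup A)
    (hB : ∀ a : A, ∀ x ∈ B, lam a x ∈ B)
    (hC : ∀ a : A, ∀ x ∈ C, lam a x ∈ C)
    (hBn : B.Normal) (hCn : C.Normal)
    (hBtriv : ∀ x ∈ B, ∀ y ∈ B, x + y = circ x y)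
    (hCtriv : ∀ x ∈ C, ∀ y ∈ C, x + y = circ x y)
    (hfact : ∀ a : A, ∃ b ∈ B, ∃ c ∈ C, a = b + c) :
    rseriesOf (bstar (A := A)) 2 = ⊥ ∧ ∀ x y z : A, bstar (bstar x y) z = 0 := by
  have hBC : Codisjoint B C := codisjoint_iff.mpr <| eq_top_iff.mpr fun a _ => by
    obtain ⟨b, hb, c, hc, rfl⟩ := hfact a
    exact AddSubgroup.add_mem_sup hb hc
  have hker (x y : A) : bstar x y ∈ lamKer A := mem_lamKer_iff.mpr fun z => by
    obtain ⟨b, hb, c, hc, rfl⟩ := hfact z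
    rw [lam_add, IsLeftIdeal.lam_bstar_eq_self hB hBtriv hC hCtriv hBC x y hb,
      IsLeftIdeal.lam_bstar_eq_self hC hCtriv hB hBtriv hBC.symm x y hc]
  exact ⟨rseriesOf_bstar_two_eq_bot_iff.mpr hker,
    fun x y => mem_lamKer_iff_bstar_eq_zero.mp (hker x y)⟩
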